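/- arXiv:1501.04370 — 2 statements merged into one kernel-verified Lean document; each statement's English description precedes it below -/
import Mathlib

section
/- Assume α_i(S) > 0 for every i ∈ V and S ⊆ V \ {i}. Let n = |V|, let 1 ≤ k ≤ n, and let σ_k, σ_{k+1}, …, σ_n be distinct elements of V; for k ≤ m ≤ n set U_{σ_m} := V \ {σ_m, …, σ_n}, and define the joint weight P(σ_k, …, σ_n) := Σ over all linear orderings ≺ of V whose last n − k + 1 elements are, in order, σ_k, …, σ_n, of Π_{i ∈ V} α_i(U_i^≺) (for k = n + 1, i.e. an empty suffix, this sum is over all linear orderings of V and equals L(V)). Then the conditional probability of σ_k given the suffix σ_{k+1}, …, σ_n, namely P(σ_k, σ_{k+1}, …, σ_n) / P(σ_{k+1}, …, σ_n), is well defined and equals L(U_{σ_k}) · α_{σ_k}(U_{σ_k}) / L(U_{σ_k} ∪ {σ_k}). -/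
/-- The finite set of elements of the list `l` strictly preceding the element `i`
(the prefix of `l` before the first occurrence of `i`). -/
def predSet {ι : Type*} [DecidableEq ι] (l : List ι) (i : ι) : Finset ι :=
  (l.takeWhile (fun a => decide (a ≠ i))).toFinset

/-- All linear orderings of the finite set `S`, i.e. all lists enumerating the
elements of `S` without repetition. -/
noncomputable def orderings {ι : Type*} [DecidableEq ι] (S : Finset ι) : Finset (List ι) :=
  S.toList.permutations.toFinset

/-- `L(S)`: the sum over all linear orderings `(σ₁, …, σ_k)` of `S` of
`∏_{j=1}^{k} α_{σ_j}({σ₁, …, σ_{j−1}})`, with `L(∅) = 1`. -/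
noncomputable def Lfun {ι : Type*} [DecidableEq ι] (α : ι → Finset ι → ℝ) (S : Finset ι) : ℝ :=
  ∑ l ∈ orderings S, ∏ i ∈ S, α i (predSet l i)

/-- The joint weight `P(σ_k, …, σ_n)` of a suffix `s = (σ_k, …, σ_n)`: the sum, over all
linear orderings `≺` of `V` whose last elements are, in order, the elements of `s`, of
`∏_{i ∈ V} α_i(U_i^≺)`.  (For the empty suffix this is the sum over all linear orderings
of `V`, which equals `L(V)`.) -/
noncomputable def jointWeight {ι : Type*} [DecidableEq ι] (α : ι → Finset ι → ℝ)
    (V : Finset ι) (s : List ι) : ℝ :=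
  ∑ l ∈ (orderings V).filter (fun l => s <:+ l), ∏ i ∈ V, α i (predSet l i)

/-! Split an ordering of `V` ending in `s` as `t ++ s`, with `t` an ordering of `U = V \ s`. The
factors of the entries of `t` depend only on `t`, while those of the entries of `s` see `t` only
through its underlying set `U`. Hence `P(s) = L(U) * w(U, s)`, where `w(U, s)` is the weight of
appending `s` after `U`. For the suffix `σ :: s` and `U = V \ (σ :: s)`, this weight is
`w(U, σ :: s) = α σ U * w(insert σ U, s)`; as `insert σ U = V \ s`, the factor `w(insert σ U, s)`
cancels from the ratio of joint weights. -/

section Weights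

variable {ι M : Type*} [DecidableEq ι] [CommMonoid M]

/-- The weight of appending the entries of a list, in order, after the elements of a finite set
(the paper's product over the positions of the list, started from that set instead of `∅`).
It is the factor which the suffix of a linear ordering contributes to the weight of the ordering. -/
def appendWeight (α : ι → Finset ι → M) : Finset ι → List ι → M
  | _, [] => 1
  | U, a :: l => α a U * appendWeight α (insert a U) l

theorem appendWeight_append (α : ι → Finset ι → M) (U : Finset ι) (t s : List ι) :
    appendWeight α U (t ++ s) = appendWeight α U t * appendWeight α (U ∪ t.toFinset) s := by
  induction t generalizing U with
  | nil => simp [appendWeight]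
  | cons a t ih => simp [appendWeight, ih, mul_assoc]

theorem predSet_cons_self (a : ι) (l : List ι) : predSet (a :: l) a = ∅ := by
  simp [predSet]

theorem predSet_cons_of_ne {a i : ι} (h : a ≠ i) (l : List ι) :
    predSet (a :: l) i = insert a (predSet l i) := by
  simp [predSet, h]

theorem predSet_subset_toFinset (l : List ι) (i : ι) : predSet l i ⊆ l.toFinset := fun _ hx =>
  List.mem_toFinset.mpr ((List.takeWhile_sublist _).subset (List.mem_toFinset.mp hx))

theorem notMem_predSet (l : List ι) (i : ι) : i ∉ predSet l i := fun h => by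
  simpa using List.mem_takeWhile_imp (List.mem_toFinset.mp h)

theorem prod_union_predSet_eq_appendWeight (α : ι → Finset ι → M) (U : Finset ι) {l : List ι}
    (hl : l.Nodup) : ∏ i ∈ l.toFinset, α i (U ∪ predSet l i) = appendWeight α U l := by
  induction l generalizing U with
  | nil => rfl
  | cons a l ih =>
    obtain ⟨ha, hl⟩ := List.nodup_cons.mp hl
    rw [List.toFinset_cons, Finset.prod_insert (by simpa using ha), predSet_cons_self,
      Finset.union_empty, appendWeight, ← ih (insert a U) hl]
    congr 1
    refine Finset.prod_congr rfl fun i hi => ?_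
    have hai : a ≠ i := fun h => ha (h ▸ List.mem_toFinset.mp hi)
    rw [predSet_cons_of_ne hai, Finset.union_insert, Finset.insert_union]

end Weights

section Orderings

variable {ι : Type*} [DecidableEq ι]

theorem mem_orderings {S : Finset ι} {l : List ι} :
    l ∈ orderings S ↔ l.Nodup ∧ l.toFinset = S := by
  rw [orderings, List.mem_toFinset, List.mem_permutations]
  constructor
  · intro h
    exact ⟨h.nodup_iff.mpr S.nodup_toList, by simp [List.toFinset_eq_of_perm _ _ h]⟩
  · rintro ⟨h, rfl⟩
    exact (List.toFinset_toList h).symm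

theorem orderings_nonempty (S : Finset ι) : (orderings S).Nonempty :=
  ⟨S.toList, mem_orderings.mpr ⟨S.nodup_toList, S.toList_toFinset⟩⟩

theorem prod_predSet_of_mem_orderings {M : Type*} [CommMonoid M] (α : ι → Finset ι → M)
    {S : Finset ι} {l : List ι} (hl : l ∈ orderings S) :
    ∏ i ∈ S, α i (predSet l i) = appendWeight α ∅ l := by
  obtain ⟨hnd, rfl⟩ := mem_orderings.mp hl
  simpa only [Finset.empty_union] using prod_union_predSet_eq_appendWeight α ∅ hnd

theorem append_mem_orderings_iff {V : Finset ι} {s t : List ι} (hnd : s.Nodup)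
    (hsub : s.toFinset ⊆ V) : t ++ s ∈ orderings V ↔ t ∈ orderings (V \ s.toFinset) := by
  simp only [mem_orderings, List.nodup_append', List.toFinset_append, hnd, true_and]
  rw [← List.disjoint_toFinset_iff_disjoint, and_assoc]
  refine and_congr_right fun _ => ⟨?_, ?_⟩
  · rintro ⟨hdisj, rfl⟩
    exact (Finset.union_sdiff_cancel_right hdisj).symm
  · intro ht
    rw [ht]
    exact ⟨Finset.sdiff_disjoint, Finset.sdiff_union_of_subset hsub⟩

theorem filter_suffix_orderings {V : Finset ι} {s : List ι} (hnd : s.Nodup)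
    (hsub : s.toFinset ⊆ V) :
    (orderings V).filter (fun l => s <:+ l) = (orderings (V \ s.toFinset)).image (· ++ s) := by
  ext l
  rw [Finset.mem_filter, Finset.mem_image]
  constructor
  · rintro ⟨hl, t, rfl⟩
    exact ⟨t, (append_mem_orderings_iff hnd hsub).mp hl, rfl⟩
  · rintro ⟨t, ht, rfl⟩
    exact ⟨(append_mem_orderings_iff hnd hsub).mpr ht, List.suffix_append t s⟩

end Orderings

section JointWeight

variable {ι : Type*} [DecidableEq ι] {V : Finset ι} {s : List ι}

theorem jointWeight_eq_Lfun_mul_appendWeight (α : ι → Finset ι → ℝ) (hnd : s.Nodup)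
    (hsub : s.toFinset ⊆ V) :
    jointWeight α V s = Lfun α (V \ s.toFinset) * appendWeight α (V \ s.toFinset) s := by
  have factor_append : ∀ t ∈ orderings (V \ s.toFinset), ∏ i ∈ V, α i (predSet (t ++ s) i)
      = (∏ i ∈ V \ s.toFinset, α i (predSet t i)) * appendWeight α (V \ s.toFinset) s := by
    intro t ht
    rw [prod_predSet_of_mem_orderings α ((append_mem_orderings_iff hnd hsub).mpr ht),
      prod_predSet_of_mem_orderings α ht, appendWeight_append, Finset.empty_union,
      (mem_orderings.mp ht).2]
  rw [jointWeight, filter_suffix_orderings hnd hsub,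
    Finset.sum_image (List.append_left_injective s).injOn, Finset.sum_congr rfl factor_append,
    ← Finset.sum_mul, Lfun]

theorem jointWeight_pos {α : ι → Finset ι → ℝ} (hα : ∀ i ∈ V, ∀ S ⊆ V, i ∉ S → 0 < α i S)
    (hnd : s.Nodup) (hsub : s.toFinset ⊆ V) : 0 < jointWeight α V s := by
  refine Finset.sum_pos (fun l hl => Finset.prod_pos fun i hi => ?_) ?_
  · obtain ⟨-, rfl⟩ := mem_orderings.mp (Finset.mem_filter.mp hl).1
    exact hα i hi _ (predSet_subset_toFinset l i) (notMem_predSet l i)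
  · rw [filter_suffix_orderings hnd hsub]
    exact (orderings_nonempty _).image _

theorem jointWeight_cons_div_jointWeight {α : ι → Finset ι → ℝ} {a : ι}
    (hnd : (a :: s).Nodup) (hsub : (a :: s).toFinset ⊆ V) (hne : jointWeight α V s ≠ 0) :
    jointWeight α V (a :: s) / jointWeight α V s
      = Lfun α (V \ (a :: s).toFinset) * α a (V \ (a :: s).toFinset)
          / Lfun α (insert a (V \ (a :: s).toFinset)) := by
  obtain ⟨ha, hsV⟩ : a ∈ V ∧ s.toFinset ⊆ V := by
    rwa [List.toFinset_cons, Finset.insert_subset_iff] at hsub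
  have has : a ∉ s.toFinset := by simpa using hnd.notMem
  have hU : insert a (V \ (a :: s).toFinset) = V \ s.toFinset := by
    rw [List.toFinset_cons, Finset.sdiff_insert_insert_of_mem_of_notMem ha has]
  have hs := jointWeight_eq_Lfun_mul_appendWeight α hnd.of_cons hsV
  rw [hs] at hne
  rw [hs, jointWeight_eq_Lfun_mul_appendWeight α hnd hsub, appendWeight, hU, ← mul_assoc,
    mul_div_mul_right _ _ (right_ne_zero_of_mul hne)]

end JointWeight

/-- Assume `α_i(S) > 0` for every `i ∈ V` and `S ⊆ V \ {i}`.  Let `σ_k, σ_{k+1}, …, σ_n`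
be distinct elements of `V` (the list `σₖ :: s`), and set `U := V \ {σ_k, …, σ_n}`
(which is `U_{σ_k}`).  Then the conditional probability of `σ_k` given the suffix
`σ_{k+1}, …, σ_n`, namely `P(σ_k, σ_{k+1}, …, σ_n) / P(σ_{k+1}, …, σ_n)`, is well
defined (the denominator is nonzero) and equals
`L(U) · α_{σ_k}(U) / L(U ∪ {σ_k})`. -/
theorem conditional_sampling_prob {ι : Type*} [DecidableEq ι] (α : ι → Finset ι → ℝ)
    (V : Finset ι) (hα : ∀ i ∈ V, ∀ S ⊆ V, i ∉ S → 0 < α i S)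
    (σₖ : ι) (s : List ι) (hnd : (σₖ :: s).Nodup) (hsub : (σₖ :: s).toFinset ⊆ V) :
    jointWeight α V s ≠ 0 ∧
      jointWeight α V (σₖ :: s) / jointWeight α V s
        = Lfun α (V \ (σₖ :: s).toFinset) * α σₖ (V \ (σₖ :: s).toFinset)
            / Lfun α (insert σₖ (V \ (σₖ :: s).toFinset)) := by
  obtain ⟨-, hsV⟩ : σₖ ∈ V ∧ s.toFinset ⊆ V := by
    rwa [List.toFinset_cons, Finset.insert_subset_iff] at hsub
  have hne : jointWeight α V s ≠ 0 := (jointWeight_pos hα hnd.of_cons hsV).ne'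
  exact ⟨hne, jointWeight_cons_div_jointWeight hnd hsub hne⟩
end

section
/- Let 𝒢 ⊆ Ω be any subset with Σ_{G∈𝒢} w(G) > 0, and define the cumulative posterior mass Δ := Σ_{G∈𝒢} w(G) / Σ_{G∈Ω} w(G) and the estimator p̂ := Σ_{G∈𝒢} f(G)·w(G) / Σ_{G∈𝒢} w(G). Then Δ·p̂ ≤ p ≤ Δ·p̂ + 1 − Δ; equivalently, −(1 − Δ)·p̂ ≤ p − p̂ ≤ (1 − Δ)·(1 − p̂). -/
/-! Outside the observed set, a feature with values in `[a, b]` contributes between `a` and `b`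
times the unobserved weight. Multiplying the observed average by its share `Δ` of the total weight
cancels the local normalization, so these bounds leave an uncertainty `(1 - Δ) * (b - a)` in the
full average. -/

section

variable {ι R : Type*} [Ring R] [PartialOrder R] [IsOrderedRing R]
  {s t : Finset ι} {w f : ι → R} {c : R}

theorem mul_sum_sub_sum_le_sum_mul_sub_sum_mul (hst : s ⊆ t)
    (hw : ∀ i ∈ t, i ∉ s → 0 ≤ w i) (hf : ∀ i ∈ t, i ∉ s → c ≤ f i) :
    c * (∑ i ∈ t, w i - ∑ i ∈ s, w i) ≤ ∑ i ∈ t, f i * w i - ∑ i ∈ s, f i * w i := by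
  classical
  rw [← Finset.sum_sdiff_eq_sub hst, ← Finset.sum_sdiff_eq_sub hst, Finset.mul_sum]
  refine Finset.sum_le_sum fun i hi ↦ ?_
  obtain ⟨hit, his⟩ := Finset.mem_sdiff.mp hi
  exact mul_le_mul_of_nonneg_right (hf i hit his) (hw i hit his)

theorem sum_mul_sub_sum_mul_le_mul_sum_sub_sum (hst : s ⊆ t)
    (hw : ∀ i ∈ t, i ∉ s → 0 ≤ w i) (hf : ∀ i ∈ t, i ∉ s → f i ≤ c) :
    ∑ i ∈ t, f i * w i - ∑ i ∈ s, f i * w i ≤ c * (∑ i ∈ t, w i - ∑ i ∈ s, w i) := by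
  have h := mul_sum_sub_sum_le_sum_mul_sub_sum_mul (f := -f) (c := -c) hst hw
    fun i hit his ↦ neg_le_neg (hf i hit his)
  simpa only [Pi.neg_apply, neg_mul, Finset.sum_neg_distrib, ← neg_sub', neg_le_neg_iff] using h

end

theorem sound_interval_general {ι K : Type*} [Field K] [LinearOrder K] [IsStrictOrderedRing K]
    {s t : Finset ι} {w f : ι → K} {a b : K} (hst : s ⊆ t)
    (hw : ∀ i ∈ t, i ∉ s → 0 ≤ w i) (hf : ∀ i ∈ t, i ∉ s → f i ∈ Set.Icc a b)
    (hs : ∑ i ∈ s, w i ≠ 0) (ht : 0 < ∑ i ∈ t, w i) :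
    (∑ i ∈ t, f i * w i) / ∑ i ∈ t, w i ∈ Set.Icc
      ((∑ i ∈ s, w i) / (∑ i ∈ t, w i) * ((∑ i ∈ s, f i * w i) / ∑ i ∈ s, w i)
        + a * (1 - (∑ i ∈ s, w i) / ∑ i ∈ t, w i))
      ((∑ i ∈ s, w i) / (∑ i ∈ t, w i) * ((∑ i ∈ s, f i * w i) / ∑ i ∈ s, w i)
        + b * (1 - (∑ i ∈ s, w i) / ∑ i ∈ t, w i)) := by
  have common_denominator (c : K) :
      (∑ i ∈ s, w i) / (∑ i ∈ t, w i) * ((∑ i ∈ s, f i * w i) / ∑ i ∈ s, w i)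
          + c * (1 - (∑ i ∈ s, w i) / ∑ i ∈ t, w i)
        = (∑ i ∈ s, f i * w i + c * (∑ i ∈ t, w i - ∑ i ∈ s, w i)) / ∑ i ∈ t, w i := by
    field_simp
  rw [common_denominator, common_denominator]
  have lower := mul_sum_sub_sum_le_sum_mul_sub_sum_mul hst hw fun i hit his ↦ (hf i hit his).1
  have upper := sum_mul_sub_sum_mul_le_mul_sum_sub_sum hst hw fun i hit his ↦ (hf i hit his).2
  exact ⟨div_le_div_of_nonneg_right (le_sub_iff_add_le'.mp lower) ht.le,
    div_le_div_of_nonneg_right (sub_le_iff_le_add'.mp upper) ht.le⟩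

/-- Let `Ω` be a finite nonempty type, `w : Ω → ℝ` nonnegative weights with
`Σ_{G∈Ω} w(G) > 0`, `f : Ω → {0,1}` a feature, and
`p := Σ_{G∈Ω} f(G)·w(G) / Σ_{G∈Ω} w(G)`.  Let `𝒢 ⊆ Ω` be any subset with
`Σ_{G∈𝒢} w(G) > 0`, and define the cumulative posterior mass
`Δ := Σ_{G∈𝒢} w(G) / Σ_{G∈Ω} w(G)` and the estimator
`p̂ := Σ_{G∈𝒢} f(G)·w(G) / Σ_{G∈𝒢} w(G)`.  Then
`Δ·p̂ ≤ p ≤ Δ·p̂ + 1 − Δ`; equivalently,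
`−(1 − Δ)·p̂ ≤ p − p̂ ≤ (1 − Δ)·(1 − p̂)`. -/
theorem sound_interval {Ω : Type*} [Fintype Ω] [Nonempty Ω]
    (w : Ω → ℝ) (hw0 : ∀ g, 0 ≤ w g) (hw : 0 < ∑ g, w g)
    (f : Ω → ℝ) (hf : ∀ g, f g = 0 ∨ f g = 1)
    (𝒢 : Finset Ω) (h𝒢 : 0 < ∑ g ∈ 𝒢, w g) :
    ((∑ g ∈ 𝒢, w g) / ∑ g, w g) * ((∑ g ∈ 𝒢, f g * w g) / ∑ g ∈ 𝒢, w g)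
        ≤ (∑ g, f g * w g) / ∑ g, w g ∧
      (∑ g, f g * w g) / ∑ g, w g
        ≤ ((∑ g ∈ 𝒢, w g) / ∑ g, w g) * ((∑ g ∈ 𝒢, f g * w g) / ∑ g ∈ 𝒢, w g)
            + 1 - (∑ g ∈ 𝒢, w g) / ∑ g, w g := by
  have hf01 (g : Ω) : f g ∈ Set.Icc 0 1 := by rcases hf g with h | h <;> simp [h]
  simpa only [Set.mem_Icc, zero_mul, add_zero, one_mul, add_sub_assoc] using
    sound_interval_general 𝒢.subset_univ (fun g _ _ ↦ hw0 g) (fun g _ _ ↦ hf01 g) h𝒢.ne' hw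
end
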